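/- arXiv:2402.19089 — 2 statements merged into one kernel-verified Lean document; each statement's English description precedes it below -/
import Mathlib

section
/- Let 𝒜 be a standardized completely reachable binary circular DFA on ℤ_n and let S be a nonempty proper subset of ℤ_n. Then there exists a word w of length at most n/|H_{t(S)}| − n/|H_{m(S)}| + 1 and a subset R ⊆ ℤ_n with δ(R,w) = S such that either |R| = |S| + 1, or m(R) ≤ t(S) < m(S). -/
/-!
Write `H_i` for `Hchain δa i`, `m = m(S)`, `t = t(S)`.

The chain `H_i` reaches the whole group: it stabilises at some `H` with `δa(H) ⊆ H`, and if such an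
`H` were proper, then every predecessor of the complement of an `H`-coset would again be the
complement of an `H`-coset (an `a`-predecessor can only exist for the coset `H` itself, because `0`
is not in the image of `δa`). The complement of `H` would then be unreachable. Hence `m` is a
genuine minimum, and `t < m`.

The set `A = H_m ∩ S` is a union of `H_t`-cosets but not of `H_{t+1}`-cosets. As `H_{t+1}` is
generated by `H_t` and `δa(H_t) \ H_t`, there are `g = δa(h)` with `h ∈ H_t` and `x ∈ H_m \ A` with
`x + g ∈ A` (`exists_shift`). Only `x` modulo `H_t` matters, so `x` may be replaced by a
natural number `k ≤ n/|H_t| - n/|H_m|` (`exists_nat_rep`). Then `T = S - k` misses `0` and contains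
`δa(h)`. Let `R = δa⁻¹(T)`, so that `a b^k` sends `R` to `S`. If `0 ∈ R`, then `|R| = |S| + 1`
(`ncard_preimage`); otherwise `R` separates `0` from `h` inside `H_t`, so `m(R) ≤ t`.
-/

/-- The two-letter alphabet of a binary DFA. -/
inductive Letter where
  | a : Letter
  | b : Letter

/-- Left-to-right action of a word on `ZMod n`, where the letter `b` acts as `q ↦ q + 1`
(a cyclic permutation) and the letter `a` acts as the given map `δa`. -/
def act {n : ℕ} (δa : ZMod n → ZMod n) : List Letter → ZMod n → ZMod n
  | [], q => q
  | Letter.a :: w, q => act δa w (δa q)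
  | Letter.b :: w, q => act δa w (q + 1)

/-- A binary circular DFA is completely reachable if every nonempty subset of states
is the image of the full state set under the action of some word. -/
def CompletelyReachable {n : ℕ} (δa : ZMod n → ZMod n) : Prop :=
  ∀ S : Set (ZMod n), S.Nonempty → ∃ w : List Letter, act δa w '' Set.univ = S

/-- A binary circular DFA is standardized if `0` has no `δa`-preimage and `δa 0` is the
unique state with more than one `δa`-preimage. -/
def Standardized {n : ℕ} (δa : ZMod n → ZMod n) : Prop :=
  (∀ q : ZMod n, δa q ≠ 0) ∧
  ∀ p : ZMod n, 1 < {q : ZMod n | δa q = p}.ncard ↔ p = δa 0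

/-- The orbit `O(𝒜) = {δa^i(0) : i ≥ 1}`. -/
def orbitSet {n : ℕ} (δa : ZMod n → ZMod n) : Set (ZMod n) :=
  {q : ZMod n | ∃ i : ℕ, 1 ≤ i ∧ δa^[i] 0 = q}

/-- The orbit subgroup `K(𝒜)`: the subgroup of `(ZMod n, +)` generated by the orbit. -/
def orbitSubgroup {n : ℕ} (δa : ZMod n → ZMod n) : AddSubgroup (ZMod n) :=
  AddSubgroup.closure (orbitSet δa)

/-- The chain of subgroups `H_0 = {0}`, `H_{i+1} = ⟨H_i ∪ (δa(H_i) \ H_i)⟩`. -/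
def Hchain {n : ℕ} (δa : ZMod n → ZMod n) : ℕ → AddSubgroup (ZMod n)
  | 0 => ⊥
  | i + 1 =>
      AddSubgroup.closure
        ((Hchain δa i : Set (ZMod n)) ∪
          (δa '' (Hchain δa i : Set (ZMod n)) \ (Hchain δa i : Set (ZMod n))))

/-- `T` is a union of `H`-cosets iff it is closed under adding elements of `H`. -/
def IsUnionOfCosets {n : ℕ} (H : AddSubgroup (ZMod n)) (T : Set (ZMod n)) : Prop :=
  ∀ x ∈ T, ∀ h ∈ H, x + h ∈ T

/-- `m(S) = min {i : H_i ∩ S ∉ {∅, H_i}}`. -/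
noncomputable def mOf {n : ℕ} (δa : ZMod n → ZMod n) (S : Set (ZMod n)) : ℕ :=
  sInf {i : ℕ | ((Hchain δa i : Set (ZMod n)) ∩ S).Nonempty ∧
    (Hchain δa i : Set (ZMod n)) ∩ S ≠ (Hchain δa i : Set (ZMod n))}

/-- `t(S) = max {i : H_{m(S)} ∩ S is a union of H_i-cosets}`. -/
noncomputable def tOf {n : ℕ} (δa : ZMod n → ZMod n) (S : Set (ZMod n)) : ℕ :=
  sSup {i : ℕ | IsUnionOfCosets (Hchain δa i)
    ((Hchain δa (mOf δa S) : Set (ZMod n)) ∩ S)}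

/-! ### Images under words -/

lemma act_replicate_b {n : ℕ} (δa : ZMod n → ZMod n) (k : ℕ) (q : ZMod n) :
    act δa (List.replicate k Letter.b) q = q + k := by
  induction k generalizing q with
  | zero => simp [act]
  | succ k ih => simp [List.replicate_succ, act, ih]; ring

lemma act_cons_b_image {n : ℕ} (δa : ZMod n → ZMod n) (w : List Letter) (U : Set (ZMod n)) :
    act δa (Letter.b :: w) '' U = act δa w '' ((· + 1) '' U) := by
  rw [Set.image_image]; rfl

lemma act_cons_a_image {n : ℕ} (δa : ZMod n → ZMod n) (w : List Letter) (U : Set (ZMod n)) :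
    act δa (Letter.a :: w) '' U = act δa w '' (δa '' U) := by
  rw [Set.image_image]; rfl

/-! ### The chain of subgroups reaches the whole group -/

/-- If `δa` preserves `H` and misses `0`, every predecessor of the complement of an `H`-coset
is the complement of an `H`-coset. -/
lemma predecessor_compl_coset {n : ℕ} [NeZero n] (δa : ZMod n → ZMod n) (h0 : ∀ q, δa q ≠ 0)
    (H : AddSubgroup (ZMod n)) (hH : ∀ x ∈ H, δa x ∈ H) (w : List Letter) (U : Set (ZMod n))
    (c : ZMod n) (hU : act δa w '' U = {x | x - c ∉ H}) : ∃ c', U = {x | x - c' ∉ H} := by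
  induction w generalizing U with
  | nil => exact ⟨c, by simpa [act] using hU⟩
  | cons l w ih =>
    cases l with
    | a =>
      rw [act_cons_a_image] at hU
      obtain ⟨c', hc'⟩ := ih _ hU
      -- `0` is not in the image, so the missing coset is `H` itself
      have hc : c' ∈ H := by
        by_contra hc
        have : (0 : ZMod n) ∈ δa '' U := by rw [hc']; simpa using hc
        obtain ⟨q, -, hq⟩ := this
        exact h0 q hq
      have hc'' : δa '' U = {x | x ∉ H} := by
        rw [hc']; ext x
        exact not_congr (by simpa [sub_eq_add_neg] using H.add_mem_cancel_right (H.neg_mem hc))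
      refine ⟨0, ?_⟩
      simp only [sub_zero]
      refine Set.eq_of_subset_of_ncard_le ?_ ?_ (Set.toFinite _)
      · intro x hx hxH
        have : δa x ∈ δa '' U := ⟨x, hx, rfl⟩
        rw [hc''] at this
        exact this (hH x hxH)
      · rw [← hc'']
        exact Set.ncard_image_le (Set.toFinite _)
    | b =>
      rw [act_cons_b_image] at hU
      obtain ⟨c', hc'⟩ := ih _ hU
      refine ⟨c' - 1, ?_⟩
      ext x
      have h1 : x ∈ U ↔ x + 1 ∈ (· + 1) '' U := by simp
      rw [h1, hc']
      have h2 : x - (c' - 1) = x + 1 - c' := by ring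
      simp only [Set.mem_ofPred_eq, h2]

lemma eq_top_of_invariant {n : ℕ} [NeZero n] (δa : ZMod n → ZMod n) (h0 : ∀ q, δa q ≠ 0)
    (hcr : CompletelyReachable δa)
    (H : AddSubgroup (ZMod n)) (hH : ∀ x ∈ H, δa x ∈ H) : H = ⊤ := by
  by_contra hne
  have : ∃ x, x ∉ H := by
    by_contra! h
    exact hne (eq_top_iff.2 fun x _ => h x)
  obtain ⟨w, hw⟩ := hcr {x | x - 0 ∉ H} (by obtain ⟨x, hx⟩ := this; exact ⟨x, by simpa using hx⟩)
  obtain ⟨c, hc⟩ := predecessor_compl_coset δa h0 H hH w _ _ hw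
  have : c ∈ {x | x - c ∉ H} := by rw [← hc]; trivial
  simp at this

lemma Hchain_mono {n : ℕ} (δa : ZMod n → ZMod n) : Monotone (Hchain δa) := by
  refine monotone_nat_of_le_succ fun i => ?_
  intro x hx
  rw [Hchain]
  exact AddSubgroup.subset_closure (Or.inl hx)

lemma Hchain_eq_top {n : ℕ} [NeZero n] (δa : ZMod n → ZMod n) (h0 : ∀ q, δa q ≠ 0)
    (hcr : CompletelyReachable δa) : ∃ i, Hchain δa i = ⊤ := by
  obtain ⟨N, hN⟩ := WellFoundedGT.monotone_chain_condition ⟨Hchain δa, Hchain_mono δa⟩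
  refine ⟨N, eq_top_of_invariant δa h0 hcr _ fun x hx => ?_⟩
  by_contra hx'
  have h1 : Hchain δa N = Hchain δa (N + 1) := hN (N + 1) (Nat.le_succ N)
  apply hx'
  rw [h1, Hchain]
  exact AddSubgroup.subset_closure (Or.inr ⟨⟨x, hx, rfl⟩, hx'⟩)

/-! ### Sizes of preimages -/

/-- `δa` has rank `n - 1`: a word with an `a` in it has rank at most that of `δa`, and some word has
image `{0}ᶜ`. -/
lemma image_compl_zero {n : ℕ} [NeZero n] (δa : ZMod n → ZMod n) (h0 : ∀ q, δa q ≠ 0)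
    (hcr : CompletelyReachable δa) : Set.range δa = {0}ᶜ := by
  have key : ∀ w, act δa w '' Set.univ = Set.univ ∨
      (act δa w '' Set.univ).ncard ≤ (Set.range δa).ncard := by
    intro w
    induction w with
    | nil => left; simp [act]
    | cons l w ih =>
      cases l with
      | a =>
        right
        rw [act_cons_a_image, Set.image_univ]
        exact Set.ncard_image_le (Set.toFinite _)
      | b =>
        rw [act_cons_b_image]
        have : (· + (1 : ZMod n)) '' Set.univ = Set.univ := by
          rw [Set.image_univ]; exact (add_right_surjective (1 : ZMod n)).range_eq
        rwa [this]
  obtain ⟨w, hw⟩ := hcr ({0}ᶜ) ⟨δa 0, h0 0⟩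
  have hsub : Set.range δa ⊆ {0}ᶜ := by rintro _ ⟨q, rfl⟩; exact h0 q
  refine Set.eq_of_subset_of_ncard_le hsub ?_ (Set.toFinite _)
  rcases key w with h | h
  · rw [hw] at h
    have : (0 : ZMod n) ∈ ({0}ᶜ : Set (ZMod n)) := by rw [h]; trivial
    simp at this
  · rwa [hw] at h

/-- Away from `0`, `δa` is a permutation of the nonzero states, so adding the state `0` to the
preimage of a set raises its size by exactly one. -/
lemma ncard_preimage {n : ℕ} [NeZero n] (δa : ZMod n → ZMod n)
    (hstd : Standardized δa) (hcr : CompletelyReachable δa) (T : Set (ZMod n))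
    (hT : (0 : ZMod n) ∉ T) (hT' : δa 0 ∈ T) : (δa ⁻¹' T).ncard = T.ncard + 1 := by
  have hr := image_compl_zero δa hstd.1 hcr
  obtain ⟨e, he, he0⟩ : ∃ e, δa e = δa 0 ∧ e ≠ 0 := by
    have h := (hstd.2 (δa 0)).2 rfl
    obtain ⟨e, he, h'⟩ := Set.exists_ne_of_one_lt_ncard h 0
    exact ⟨e, he, h'⟩
  have hsurj : ∀ p ≠ 0, ∃ q ≠ 0, δa q = p := by
    intro p hp
    have : p ∈ Set.range δa := by rw [hr]; exact hp
    obtain ⟨q, rfl⟩ := this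
    by_cases hq : q = 0
    · subst hq; exact ⟨e, he0, he⟩
    · exact ⟨q, hq, rfl⟩
  have himg : δa '' {0}ᶜ = {0}ᶜ := by
    ext p
    constructor
    · rintro ⟨q, -, rfl⟩; exact hstd.1 q
    · intro hp
      obtain ⟨q, hq, h⟩ := hsurj p hp
      exact ⟨q, hq, h⟩
  have hinj : Set.InjOn δa {0}ᶜ :=
    Set.injOn_of_ncard_image_eq (by rw [himg]) (Set.toFinite _)
  have h1 : δa '' ((δa ⁻¹' T) \ {0}) = T := by
    ext p
    constructor
    · rintro ⟨q, hq, rfl⟩; exact hq.1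
    · intro hp
      obtain ⟨q, hq, rfl⟩ := hsurj p (by rintro rfl; exact hT hp)
      exact ⟨q, ⟨hp, hq⟩, rfl⟩
  have h2 : ((δa ⁻¹' T) \ {0}).ncard = T.ncard := by
    conv_rhs => rw [← h1]
    exact (hinj.mono fun x hx => hx.2).ncard_image.symm
  rw [← h2]
  exact (Set.ncard_sdiff_singleton_add_one (s := δa ⁻¹' T) (a := 0) hT' (Set.toFinite _)).symm

/-! ### Cosets -/

/-- The natural numbers up to `n/|H| - n/|K|` represent all cosets of `H` in `K`: the subgroup `K`
consists of the multiples of `n/|K|`. -/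
lemma exists_nat_rep {n : ℕ} [NeZero n] (H K : AddSubgroup (ZMod n)) (hHK : H ≤ K)
    (x : ZMod n) (hx : x ∈ K) :
    ∃ k : ℕ, k ≤ n / Nat.card H - n / Nat.card K ∧ x - k ∈ H := by
  have hn : 0 < n := NeZero.pos n
  have hidx : ∀ L : AddSubgroup (ZMod n), n / Nat.card L = L.index := by
    intro L
    have h := L.card_mul_index
    rw [Nat.card_zmod] at h
    exact Nat.div_eq_of_eq_mul_right Nat.card_pos h.symm
  rw [hidx, hidx]
  have hdvd : K.index ∣ H.index := AddSubgroup.index_dvd_of_le hHK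
  have hHpos : 0 < H.index := Nat.pos_of_ne_zero AddSubgroup.index_ne_zero_of_finite
  have hxK : K.index ∣ x.val := by
    have h1 : Nat.card K • x = 0 := by
      exact congrArg Subtype.val (card_nsmul_eq_zero' (x := (⟨x, hx⟩ : K)))
    have h2 : ((Nat.card K * x.val : ℕ) : ZMod n) = 0 := by
      rw [nsmul_eq_mul] at h1
      simpa using h1
    rw [ZMod.natCast_eq_zero_iff] at h2
    have h3 := K.card_mul_index
    rw [Nat.card_zmod] at h3
    exact Nat.dvd_of_mul_dvd_mul_left Nat.card_pos (h3.dvd.trans h2)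
  refine ⟨x.val % H.index, ?_, ?_⟩
  · have hlt := Nat.mod_lt x.val hHpos
    have hd : K.index ∣ H.index - x.val % H.index :=
      Nat.dvd_sub hdvd ((Nat.dvd_mod_iff hdvd).2 hxK)
    have := Nat.le_of_dvd (by omega) hd
    omega
  · have hxe : x = ((H.index * (x.val / H.index) + x.val % H.index : ℕ) : ZMod n) := by
      rw [Nat.div_add_mod]; simp
    have he : x - ((x.val % H.index : ℕ) : ZMod n) = (x.val / H.index) • (H.index • (1 : ZMod n)) := by
      nth_rewrite 1 [hxe]
      simp only [nsmul_eq_mul]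
      push_cast
      ring
    rw [he]
    exact H.nsmul_mem (H.nsmul_index_mem 1) _

/-- A set that is not a union of cosets of `⟨G⟩` fails to be closed under subtracting some
generator; by finiteness, closure under subtraction would give closure under addition. -/
lemma exists_shift {n : ℕ} [NeZero n] (G A : Set (ZMod n))
    (hA : ¬ IsUnionOfCosets (AddSubgroup.closure G) A) :
    ∃ g ∈ G, ∃ x, x ∉ A ∧ x + g ∈ A := by
  by_contra! hcon
  apply hA
  have key : ∀ g ∈ AddSubgroup.closure G, ∀ y, y + g ∈ A ↔ y ∈ A := by
    intro g hg
    induction hg using AddSubgroup.closure_induction with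
    | mem g hg =>
      have hsub : (· + g) ⁻¹' A ⊆ A := by
        intro x hx
        by_contra hxA
        exact hcon g hg x hxA hx
      have hcard : ((· + g) ⁻¹' A).ncard = A.ncard :=
        Set.ncard_preimage_of_injective_subset_range (add_left_injective g)
          (by rw [(add_right_surjective g).range_eq]; exact Set.subset_univ _)
      have heq := Set.eq_of_subset_of_ncard_le hsub hcard.ge (Set.toFinite _)
      intro y
      exact Set.ext_iff.1 heq y
    | zero => simp
    | add g h _ _ ihg ihh => intro y; rw [← add_assoc, ihh, ihg]
    | neg g _ ih => intro y; rw [← ih (y + -g)]; simp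
  exact fun x hx h hh => (key h hh x).2 hx

/-! ### Short predecessors -/

/-- In a standardized completely reachable binary circular DFA, every
nonempty proper subset `S` has a `w`-predecessor `R` for some word `w` of length at most
`n/|H_{t(S)}| − n/|H_{m(S)}| + 1` such that either `|R| = |S| + 1` or
`m(R) ≤ t(S) < m(S)`. -/
theorem stmt5 {n : ℕ} [NeZero n] (δa : ZMod n → ZMod n)
    (hstd : Standardized δa) (hcr : CompletelyReachable δa)
    (S : Set (ZMod n)) (hne : S.Nonempty) (hprop : S ≠ Set.univ) :
    ∃ (w : List Letter) (R : Set (ZMod n)),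
      act δa w '' R = S ∧
      w.length ≤ n / Nat.card ↥(Hchain δa (tOf δa S)) -
        n / Nat.card ↥(Hchain δa (mOf δa S)) + 1 ∧
      (R.ncard = S.ncard + 1 ∨ (mOf δa R ≤ tOf δa S ∧ tOf δa S < mOf δa S)) := by
  have hm : ((Hchain δa (mOf δa S) : Set (ZMod n)) ∩ S).Nonempty ∧
      (Hchain δa (mOf δa S) : Set (ZMod n)) ∩ S ≠ (Hchain δa (mOf δa S) : Set (ZMod n)) := by
    refine Nat.sInf_mem (s := {i : ℕ | ((Hchain δa i : Set (ZMod n)) ∩ S).Nonempty ∧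
      (Hchain δa i : Set (ZMod n)) ∩ S ≠ (Hchain δa i : Set (ZMod n))}) ?_
    obtain ⟨i, hi⟩ := Hchain_eq_top δa hstd.1 hcr
    exact ⟨i, by simpa [hi] using hne, by simpa [hi] using hprop⟩
  set m := mOf δa S with hmdef
  set A : Set (ZMod n) := (Hchain δa m : Set (ZMod n)) ∩ S with hAdef
  have hbd : ∀ i, IsUnionOfCosets (Hchain δa i) A → i < m := by
    intro i hi
    by_contra! hmi
    obtain ⟨⟨y, hy⟩, hne'⟩ := hm
    refine hne' (Set.Subset.antisymm Set.inter_subset_left fun z hz => ?_)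
    have := hi y hy (z - y) (Hchain_mono δa hmi ((Hchain δa m).sub_mem hz hy.1))
    simpa using this
  have hBdd : BddAbove {i : ℕ | IsUnionOfCosets (Hchain δa i) A} := ⟨m, fun i hi => (hbd i hi).le⟩
  have ht : IsUnionOfCosets (Hchain δa (tOf δa S)) A := by
    refine Nat.sSup_mem (s := {i : ℕ | IsUnionOfCosets (Hchain δa i) A}) ⟨0, ?_⟩ hBdd
    intro x hx h hh
    have : h = 0 := by simpa [Hchain] using hh
    simpa [this] using hx
  have ht1 : ¬ IsUnionOfCosets (Hchain δa (tOf δa S + 1)) A := by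
    intro h
    have h' : tOf δa S + 1 ≤ tOf δa S := le_csSup hBdd h
    omega
  set t := tOf δa S with htdef
  have htm : t < m := hbd t ht
  rw [Hchain] at ht1
  obtain ⟨g, hg, x, hxA, hxg⟩ := exists_shift _ _ ht1
  -- `A` is invariant under `H_t`, so the separating generator lies in `δa(H_t) \ H_t`
  have hgt : g ∉ Hchain δa t := by
    intro hgt
    apply hxA
    simpa using ht _ hxg (-g) ((Hchain δa t).neg_mem hgt)
  obtain ⟨⟨h, hh, rfl⟩, -⟩ : g ∈ δa '' (Hchain δa t : Set (ZMod n)) \ (Hchain δa t : Set _) :=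
    hg.resolve_left hgt
  have hgm : δa h ∈ Hchain δa m := by
    apply Hchain_mono δa (Nat.succ_le_of_lt htm)
    rw [Hchain]
    exact AddSubgroup.subset_closure hg
  have hxm : x ∈ Hchain δa m := by
    simpa using (Hchain δa m).sub_mem hxg.1 hgm
  obtain ⟨k, hk, hxk⟩ := exists_nat_rep _ _ (Hchain_mono δa htm.le) x hxm
  have hkm : (k : ZMod n) ∈ Hchain δa m := by
    simpa using (Hchain δa m).sub_mem hxm (Hchain_mono δa htm.le hxk)
  have hkA : (k : ZMod n) ∉ A := fun hkA => hxA (by simpa using ht _ hkA _ hxk)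
  have hkS : (k : ZMod n) ∉ S := fun hkS => hkA ⟨hkm, hkS⟩
  have hkg : (k : ZMod n) + δa h ∈ S := by
    have h1 := ht _ hxg _ ((Hchain δa t).neg_mem hxk)
    have h2 : x + δa h + -(x - k) = k + δa h := by ring
    rw [h2] at h1
    exact h1.2
  set T : Set (ZMod n) := (· + (k : ZMod n)) ⁻¹' S with hT
  have hT0 : (0 : ZMod n) ∉ T := by simpa [hT] using hkS
  have hTh : δa h ∈ T := by simpa [hT, add_comm] using hkg
  have hTS : (· + (k : ZMod n)) '' T = S :=
    Set.image_preimage_eq _ (add_right_surjective (k : ZMod n))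
  have hTcard : T.ncard = S.ncard := by
    conv_rhs => rw [← hTS]
    exact (Set.ncard_image_of_injective _ (add_left_injective _)).symm
  refine ⟨Letter.a :: List.replicate k Letter.b, δa ⁻¹' T, ?_, ?_, ?_⟩
  · rw [act_cons_a_image, Set.image_preimage_eq_of_subset, ← hTS]
    · exact Set.image_congr fun q _ => act_replicate_b δa k q
    · rw [image_compl_zero δa hstd.1 hcr]
      rintro p hp rfl
      exact hT0 hp
  · simpa using hk
  · by_cases h0 : δa 0 ∈ T
    · left
      rw [ncard_preimage δa hstd hcr T hT0 h0, hTcard]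
    · right
      refine ⟨Nat.sInf_le ⟨⟨h, hh, hTh⟩, fun heq => h0 ?_⟩, htm⟩
      have : (0 : ZMod n) ∈ (Hchain δa t : Set (ZMod n)) := (Hchain δa t).zero_mem
      rw [← heq] at this
      exact this.2
end

section
/- Let 𝒜 be a standardized completely reachable binary circular DFA on ℤ_n (n even) whose orbit subgroup K equals the subgroup 2ℤ_n of even residues. Then the coset K ⊕ 1 (odd residues) is n-expandable; moreover there exist natural numbers s, t with t ≥ 1 and s + t ≤ n such that the word a^s b^{t−1} a expands K ⊕ 1. -/
/-- A word `w` expands a subset `S` if some strictly larger subset `R` satisfies `δ(R,w) = S`. -/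
def Expands {n : ℕ} (δa : ZMod n → ZMod n) (w : List Letter) (S : Set (ZMod n)) : Prop :=
  ∃ R : Set (ZMod n), S.ncard < R.ncard ∧ act δa w '' R = S

/-- A subset `S` is `ℓ`-expandable if some word of length at most `ℓ` expands it. -/
def Expandable {n : ℕ} (δa : ZMod n → ZMod n) (ℓ : ℕ) (S : Set (ZMod n)) : Prop :=
  ∃ w : List Letter, w.length ≤ ℓ ∧ Expands δa w S

/-- The parity homomorphism `ℤ_n → ℤ_2` for even `n`. -/
def parity {n : ℕ} (hev : Even n) : ZMod n →+* ZMod 2 :=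
  ZMod.castHom hev.two_dvd (ZMod 2)

lemma parity_eq_val {n : ℕ} [NeZero n] (hev : Even n) (x : ZMod n) :
    parity hev x = (x.val : ZMod 2) := by
  conv_lhs => rw [← ZMod.natCast_zmod_val x]
  exact map_natCast _ _

lemma zmod_two_eq_one {x : ZMod 2} (h : x ≠ 0) : x = 1 := by
  revert x; decide

lemma mem_zmultiples_iff {n : ℕ} [NeZero n] (hev : Even n) (x : ZMod n) :
    x ∈ AddSubgroup.zmultiples (2 : ZMod n) ↔ parity hev x = 0 := by
  constructor
  · rintro ⟨k, rfl⟩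
    have h2 : parity hev 2 = 0 := by
      rw [show (2 : ZMod n) = ((2 : ℕ) : ZMod n) by norm_num, map_natCast]; rfl
    simp [h2]
  · intro h
    rw [parity_eq_val, ZMod.natCast_eq_zero_iff] at h
    obtain ⟨k, hk⟩ := h
    refine ⟨(k : ℤ), ?_⟩
    have := ZMod.natCast_zmod_val x
    rw [hk] at this
    rw [← this]
    push_cast
    simp [mul_comm]

/-- A word either acts bijectively (it contains no letter `a`), or its range is no larger than
the range of `δa`. -/
lemma act_bijective_or {n : ℕ} [NeZero n] (δa : ZMod n → ZMod n) (w : List Letter) :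
    Function.Bijective (act δa w) ∨
      (act δa w '' Set.univ).ncard ≤ (Set.range δa).ncard := by
  induction w with
  | nil => left; exact Function.bijective_id
  | cons l w ih =>
    cases l with
    | a =>
      right
      have : act δa (Letter.a :: w) '' Set.univ = act δa w '' Set.range δa := by
        rw [Set.image_univ, ← Set.range_comp]; rfl
      rw [this]
      exact Set.ncard_image_le (Set.toFinite _)
    | b =>
      have he : act δa (Letter.b :: w) = act δa w ∘ Equiv.addRight (1 : ZMod n) := rfl
      rcases ih with ih | ih
      · left
        rw [he]
        exact ih.comp (Equiv.bijective _)
      · right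
        rw [he, Set.image_comp, Set.image_univ, Equiv.range_eq_univ]
        exact ih

/-- Every nonzero state is in the range of `δa`, because `{0}ᶜ` is reachable. -/
lemma exists_preimage {n : ℕ} [NeZero n] (δa : ZMod n → ZMod n)
    (hstd : Standardized δa) (hcr : CompletelyReachable δa) {y : ZMod n} (hy : y ≠ 0) :
    ∃ x, δa x = y := by
  obtain ⟨w, hw⟩ := hcr ({0}ᶜ) ⟨y, hy⟩
  have hsub : Set.range δa ⊆ {0}ᶜ := by
    rintro _ ⟨q, rfl⟩; exact hstd.1 q
  rcases act_bijective_or δa w with h | h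
  · obtain ⟨q, hq⟩ := h.2 0
    have : (0 : ZMod n) ∈ ({0}ᶜ : Set (ZMod n)) := hw ▸ ⟨q, trivial, hq⟩
    exact absurd rfl this
  · rw [hw] at h
    have := Set.eq_of_subset_of_ncard_le hsub h (Set.toFinite _)
    have hy' : y ∈ ({0}ᶜ : Set (ZMod n)) := hy
    rw [← this] at hy'
    exact hy'

/-- `δa` maps the nonzero states onto the nonzero states: only the state `δa 0` needs a second
preimage, and it has one. -/
lemma exists_ne_zero_preimage {n : ℕ} [NeZero n] (δa : ZMod n → ZMod n)
    (hstd : Standardized δa) (hcr : CompletelyReachable δa) {y : ZMod n} (hy : y ≠ 0) :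
    ∃ x, x ≠ 0 ∧ δa x = y := by
  obtain ⟨x, hx⟩ := exists_preimage δa hstd hcr hy
  by_cases h0 : x = 0
  · subst h0
    have h1 := (hstd.2 y).2 hx.symm
    obtain ⟨z, hz, hz0⟩ := Set.exists_ne_of_one_lt_ncard h1 0
    exact ⟨z, hz0, hz⟩
  · exact ⟨x, h0, hx⟩

lemma exists_ne_zero_iterate {n : ℕ} [NeZero n] (δa : ZMod n → ZMod n)
    (hstd : Standardized δa) (hcr : CompletelyReachable δa) (s : ℕ) {y : ZMod n} (hy : y ≠ 0) :
    ∃ x, x ≠ 0 ∧ δa^[s] x = y := by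
  induction s generalizing y with
  | zero => exact ⟨y, hy, rfl⟩
  | succ s ih =>
    obtain ⟨z, hz, rfl⟩ := exists_ne_zero_preimage δa hstd hcr hy
    obtain ⟨x, hx, rfl⟩ := ih hz
    exact ⟨x, hx, Function.iterate_succ_apply' _ _ _⟩

lemma act_word {n : ℕ} (δa : ZMod n → ZMod n) (s j : ℕ) (q : ZMod n) :
    act δa (List.replicate s Letter.a ++ List.replicate j Letter.b ++ [Letter.a]) q =
      δa (δa^[s] q + j) := by
  induction s generalizing q with
  | zero =>
    induction j generalizing q with
    | zero => simp [act]
    | succ j ih =>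
      simp only [List.replicate_zero, List.nil_append, Function.iterate_zero, id] at ih ⊢
      simp only [List.replicate_succ, List.cons_append, act, ih]
      push_cast
      congr 1
      ring
  | succ s ih =>
    simp only [List.replicate_succ, List.cons_append, act] at ih ⊢
    rw [ih, Function.iterate_succ_apply]

/-- The word `a^s b^j a` expands a set `S` of nonzero states as soon as `j` is not in the
preimage of `S` under `δa`, but its translate `δa^s 0 + j` is. -/
lemma expands_of_witness {n : ℕ} [NeZero n] (δa : ZMod n → ZMod n)
    (hstd : Standardized δa) (hcr : CompletelyReachable δa) (S : Set (ZMod n))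
    (h0 : (0 : ZMod n) ∉ S) (s j : ℕ) (hs : 1 ≤ s) (hj : δa j ∉ S)
    (hsj : δa (δa^[s] 0 + j) ∈ S) :
    Expands δa (List.replicate s Letter.a ++ List.replicate j Letter.b ++ [Letter.a]) S := by
  set w := List.replicate s Letter.a ++ List.replicate j Letter.b ++ [Letter.a] with hw
  have himg : act δa w '' (act δa w ⁻¹' S) = S := by
    rw [Set.image_preimage_eq_iff]
    intro y hy
    have hy0 : y ≠ 0 := fun h => h0 (h ▸ hy)
    obtain ⟨x, rfl⟩ := exists_preimage δa hstd hcr hy0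
    have hx : x - j ≠ 0 := by
      intro h
      rw [sub_eq_zero] at h
      exact hj (h ▸ hy)
    obtain ⟨q, -, hq⟩ := exists_ne_zero_iterate δa hstd hcr s hx
    exact ⟨q, by rw [act_word, hq, sub_add_cancel]⟩
  refine ⟨act δa w ⁻¹' S, ?_, himg⟩
  have ho : δa^[s] 0 ≠ 0 := by
    obtain ⟨r, rfl⟩ : ∃ r, s = r + 1 := ⟨s - 1, by omega⟩
    rw [Function.iterate_succ_apply']
    exact hstd.1 _
  obtain ⟨q, hq0, hq⟩ := exists_ne_zero_iterate δa hstd hcr s ho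
  have hle : S.ncard ≤ (act δa w ⁻¹' S).ncard := by
    conv_lhs => rw [← himg]
    exact Set.ncard_image_le (Set.toFinite _)
  refine lt_of_le_of_ne hle fun heq => hq0 ?_
  have hinj : Set.InjOn (act δa w) (act δa w ⁻¹' S) :=
    Set.injOn_of_ncard_image_eq (by rw [himg, heq]) (Set.toFinite _)
  apply hinj
  · rw [Set.mem_preimage, act_word, hq]; exact hsj
  · rw [Set.mem_preimage, act_word]; exact hsj
  · simp only [act_word, hw, hq]

/-- In `ℤ_n`, a set closed under adding `k` is closed under subtracting `k`. -/
lemma sub_mem_of_add_mem {n : ℕ} [NeZero n] (E : Set (ZMod n)) (k : ZMod n)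
    (h : ∀ x ∈ E, x + k ∈ E) : ∀ x ∈ E, x - k ∈ E := by
  intro x hx
  have hm : ∀ m : ℕ, x + m * k ∈ E := by
    intro m
    induction m with
    | zero => simpa using hx
    | succ m ih =>
      have := h _ ih
      rwa [add_assoc, ← add_one_mul, ← Nat.cast_succ] at this
  have hn : 1 ≤ n := Nat.one_le_iff_ne_zero.2 (NeZero.ne n)
  have := hm (n - 1)
  rwa [Nat.cast_sub hn, ZMod.natCast_self, Nat.cast_one, zero_sub, neg_one_mul,
    ← sub_eq_add_neg] at this

/-- Suppose that whenever `x ∈ E` leaves a set `E` of even residues under translation by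
`δa^i 0`, the representative of `x` is at least `n - i`. Then `E` is stable under all those
translations. -/
lemma even_stable {n : ℕ} [NeZero n] (hev : Even n) (δa : ZMod n → ZMod n)
    (E : Set (ZMod n)) (hE : ∀ x ∈ E, parity hev x = 0)
    (hbad : ∀ i, 1 ≤ i → ∀ x ∈ E, x + δa^[i] 0 ∉ E → n ≤ i + x.val) :
    ∀ i, ∀ x ∈ E, x + δa^[i] 0 ∈ E := by
  intro i
  induction i using Nat.strong_induction_on with
  | _ i ih =>
  intro x hx
  rcases Nat.eq_zero_or_pos i with rfl | hi
  · simpa using hx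
  by_cases hinj : Set.InjOn (fun l => δa^[l] (0 : ZMod n)) (Finset.range i : Set ℕ)
  · by_contra hxi
    have hmaps : ∀ l ∈ Finset.range i,
        (x - δa^[l] 0).val ∈ Finset.Ico (n - i) (n - 1) := by
      intro l hl
      have hl := Finset.mem_range.1 hl
      have hxl := sub_mem_of_add_mem E _ (ih l hl) x hx
      have hnot : x - δa^[l] 0 + δa^[i] 0 ∉ E := by
        intro h
        have := ih l hl _ h
        rw [show x - δa^[l] 0 + δa^[i] 0 + δa^[l] 0 = x + δa^[i] 0 by ring] at this
        exact hxi this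
      have h1 := hbad i hi _ hxl hnot
      have h2 := hE _ hxl
      rw [parity_eq_val, ZMod.natCast_eq_zero_iff] at h2
      have h3 := ZMod.val_lt (x - δa^[l] 0)
      have h4 := hev.two_dvd
      rw [Finset.mem_Ico]
      omega
    have hcard := Finset.card_le_card_of_injOn _ hmaps (by
      intro l hl l' hl' h
      exact hinj hl hl' (sub_right_injective (ZMod.val_injective n h)))
    rw [Finset.card_range, Nat.card_Ico] at hcard
    have := NeZero.pos n
    omega
  · -- If an earlier iterate repeats, then `δa^i 0` itself equals an earlier iterate.
    have hrep : ∃ l l', l < l' ∧ l' < i ∧ δa^[l] (0 : ZMod n) = δa^[l'] 0 := by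
      simp only [Set.InjOn, Finset.coe_range, Set.mem_Iio] at hinj
      push Not at hinj
      obtain ⟨l, hl, l', hl', h, hne⟩ := hinj
      rcases lt_or_gt_of_ne hne with hlt | hlt
      · exact ⟨l, l', hlt, hl', h⟩
      · exact ⟨l', l, hlt, hl, h.symm⟩
    obtain ⟨l, l', hlt, hl', h⟩ := hrep
    have heq : δa^[i] (0 : ZMod n) = δa^[i - l' + l] 0 := by
      rw [Function.iterate_add_apply, h, ← Function.iterate_add_apply]
      congr 2
      omega
    rw [heq]
    exact ih _ (by omega) x hx

/-- If `δa` preserves parity, every word acts on parities as a translation. -/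
lemma parity_act {n : ℕ} (hev : Even n) (δa : ZMod n → ZMod n)
    (h : ∀ q, parity hev (δa q) = parity hev q) (w : List Letter) :
    ∃ c, ∀ q, parity hev (act δa w q) = parity hev q + c := by
  induction w with
  | nil => exact ⟨0, fun q => by simp [act]⟩
  | cons l w ih =>
    obtain ⟨c, hc⟩ := ih
    cases l with
    | a => exact ⟨c, fun q => by simp [act, hc, h]⟩
    | b => exact ⟨1 + c, fun q => by simp [act, hc, add_assoc]⟩

/-- The witness needed for expanding the odd residues exists within the length bound. -/
lemma exists_witness {n : ℕ} [NeZero n] (hev : Even n) (δa : ZMod n → ZMod n)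
    (hstd : Standardized δa) (hcr : CompletelyReachable δa)
    (hK : orbitSubgroup δa = AddSubgroup.zmultiples (2 : ZMod n)) :
    ∃ s j : ℕ, 1 ≤ s ∧ s + j < n ∧ parity hev (δa j) = 0 ∧
      parity hev (δa (δa^[s] 0 + j)) = 1 := by
  by_contra! hno
  have horb : ∀ i, 1 ≤ i → parity hev (δa^[i] 0) = 0 := by
    intro i hi
    rw [← mem_zmultiples_iff, ← hK]
    exact AddSubgroup.subset_closure ⟨i, hi, rfl⟩
  let E : Set (ZMod n) := {x | parity hev x = 0 ∧ parity hev (δa x) = 0}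
  have hst : ∀ i, ∀ x ∈ E, x + δa^[i] 0 ∈ E := by
    refine even_stable hev δa E (fun x hx => hx.1) ?_
    intro i hi x hx hxi
    by_contra! hlt
    have h1 : parity hev (δa ((x.val : ℕ) : ZMod n)) = 0 := by
      rw [ZMod.natCast_zmod_val]; exact hx.2
    have h2 := hno i x.val hi hlt h1
    rw [ZMod.natCast_zmod_val, add_comm] at h2
    refine hxi ⟨by rw [map_add, hx.1, horb i hi, add_zero], ?_⟩
    by_contra h3
    exact h2 (zmod_two_eq_one h3)
  have hcl : ∀ k ∈ orbitSubgroup δa, ∀ x ∈ E, x + k ∈ E := by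
    intro k hk
    induction hk using AddSubgroup.closure_induction with
    | mem k hk =>
      obtain ⟨i, -, rfl⟩ := hk
      exact hst i
    | zero => simp
    | add k l _ _ hk hl =>
      intro x hx
      rw [← add_assoc]
      exact hl _ (hk _ hx)
    | neg k _ hk =>
      intro x hx
      rw [← sub_eq_add_neg]
      exact sub_mem_of_add_mem E k hk x hx
  have h0 : (0 : ZMod n) ∈ E := ⟨map_zero _, horb 1 le_rfl⟩
  have heven : ∀ x, parity hev x = 0 → parity hev (δa x) = 0 := by
    intro x hx
    have := hcl x (by rw [hK, mem_zmultiples_iff hev]; exact hx) 0 h0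
    rw [zero_add] at this
    exact this.2
  -- `δa` maps the preimage of the odd residues onto the odd residues, and this preimage
  -- consists of odd residues, so it contains all of them.
  have hodd : {x | parity hev (δa x) = 1} = {x | parity hev x = 1} := by
    refine Set.eq_of_subset_of_ncard_le ?_ ?_ (Set.toFinite _)
    · intro x hx
      refine zmod_two_eq_one fun h => ?_
      have hx : parity hev (δa x) = 1 := hx
      rw [heven x h] at hx
      exact zero_ne_one hx
    · have hsub : {x | parity hev x = 1} ⊆ δa '' {x | parity hev (δa x) = 1} := by
        intro y hy
        have hy : parity hev y = 1 := hy
        have hy0 : y ≠ 0 := by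
          rintro rfl
          rw [map_zero] at hy
          exact zero_ne_one hy
        obtain ⟨x, rfl⟩ := exists_preimage δa hstd hcr hy0
        exact ⟨x, hy, rfl⟩
      exact (Set.ncard_le_ncard hsub (Set.toFinite _)).trans
        (Set.ncard_image_le (Set.toFinite _))
  have hpres : ∀ q, parity hev (δa q) = parity hev q := by
    intro q
    by_cases h : parity hev q = 0
    · rw [h, heven q h]
    · have h := zmod_two_eq_one h
      have hq : q ∈ {x | parity hev (δa x) = 1} := by rw [hodd]; exact h
      rw [h]; exact hq
  obtain ⟨w, hw⟩ := hcr {x | parity hev x = 1} ⟨1, map_one _⟩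
  obtain ⟨c, hc⟩ := parity_act hev δa hpres w
  have hall : ∀ q, parity hev (act δa w q) = 1 := fun q => by
    have : act δa w q ∈ {x | parity hev x = 1} := hw ▸ ⟨q, trivial, rfl⟩
    exact this
  have e0 := (hc 0).symm.trans (hall 0)
  have e1 := (hc 1).symm.trans (hall 1)
  rw [map_zero, zero_add] at e0
  rw [map_one, e0] at e1
  exact absurd e1 (by decide)

/-- In a standardized completely reachable binary circular DFA on `ZMod n`
(`n` even) whose orbit subgroup equals `2ℤ_n`, the coset `K ⊕ 1` is `n`-expandable;
moreover some word `a^s b^{t−1} a` with `t ≥ 1` and `s + t ≤ n` expands `K ⊕ 1`. -/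
theorem stmt8 {n : ℕ} [NeZero n] (hev : Even n) (δa : ZMod n → ZMod n)
    (hstd : Standardized δa) (hcr : CompletelyReachable δa)
    (hK : orbitSubgroup δa = AddSubgroup.zmultiples (2 : ZMod n)) :
    Expandable δa n ((fun k => k + 1) '' (orbitSubgroup δa : Set (ZMod n))) ∧
    ∃ s t : ℕ, 1 ≤ t ∧ s + t ≤ n ∧
      Expands δa
        (List.replicate s Letter.a ++ List.replicate (t - 1) Letter.b ++ [Letter.a])
        ((fun k => k + 1) '' (orbitSubgroup δa : Set (ZMod n))) := by
  have hmem : ∀ y, y ∈ ((fun k => k + 1) '' (orbitSubgroup δa : Set (ZMod n))) ↔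
      parity hev y = 1 := by
    intro y
    rw [hK]
    constructor
    · rintro ⟨k, hk, rfl⟩
      rw [SetLike.mem_coe, mem_zmultiples_iff hev] at hk
      simp [hk]
    · intro hy
      refine ⟨y - 1, ?_, sub_add_cancel _ _⟩
      rw [SetLike.mem_coe, mem_zmultiples_iff hev, map_sub, hy, map_one, sub_self]
  obtain ⟨s, j, hs, hlt, hj, hsj⟩ := exists_witness hev δa hstd hcr hK
  have hexp := expands_of_witness δa hstd hcr
    ((fun k => k + 1) '' (orbitSubgroup δa : Set (ZMod n)))
    (by rw [hmem, map_zero]; exact zero_ne_one) s j hs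
    (by rw [hmem, hj]; exact zero_ne_one) (by rw [hmem]; exact hsj)
  refine ⟨⟨_, ?_, hexp⟩, s, j + 1, by omega, by omega, hexp⟩
  simp only [List.length_append, List.length_replicate, List.length_singleton]
  omega
end
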